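/- Let b = e0 − 2iβ²·C·e1 (with C = FE − (i/4)(K − K^{-1})), α = 1, v = (e0 − iβ·K·e1)·(1 − 2·f⁺·f⁻) with f⁺ = −iF, f⁻ = EK^{-1}, and let u ∈ Q be the Drinfeld element u = Σ_{(Φ),(R)} S(Φ''·b·S(Φ'''))·S(R'')·α·R'·Φ', where Φ = Σ Φ'⊗Φ''⊗Φ''' and R = Σ R'⊗R''. Then the balancing element g = b·S(α)·v^{-1}·u satisfies: g = K if β² = −i, and g = K^{-1} if β² = i. In particular g is group-like: Δ(g) = g⊗g. -/

import Mathlib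

open TensorProduct

set_option maxHeartbeats 1000000
set_option synthInstance.maxHeartbeats 400000

noncomputable section

/-- Generators of the restricted quantum group `Q = \bar U_i sl(2)`. -/
inductive QGen : Type
  | E | F | K | Kinv
deriving DecidableEq

/-- The free algebra on the generators. -/
abbrev FA : Type := FreeAlgebra ℂ QGen

def ιE : FA := FreeAlgebra.ι ℂ QGen.E
def ιF : FA := FreeAlgebra.ι ℂ QGen.F
def ιK : FA := FreeAlgebra.ι ℂ QGen.K
def ιKi : FA := FreeAlgebra.ι ℂ QGen.Kinv

/-- Defining relations of `\bar U_i sl(2)` (at `q = i`, i.e. `p = 2`). -/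
inductive QRel : FA → FA → Prop
  | KKi : QRel (ιK * ιKi) 1
  | KiK : QRel (ιKi * ιK) 1
  | KEKi : QRel (ιK * ιE * ιKi) (-ιE)
  | KFKi : QRel (ιK * ιF * ιKi) (-ιF)
  | EF : QRel (ιE * ιF - ιF * ιE) ((2 * Complex.I)⁻¹ • (ιK - ιKi))
  | Esq : QRel (ιE ^ 2) 0
  | Fsq : QRel (ιF ^ 2) 0
  | K4 : QRel (ιK ^ 4) 1

/-- The restricted quantum group `\bar U_i sl(2)`: the quotient of the free algebra
by the two-sided ideal generated by the defining relations. -/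
abbrev Q : Type := RingQuot QRel

def gE : Q := RingQuot.mkAlgHom ℂ QRel ιE
def gF : Q := RingQuot.mkAlgHom ℂ QRel ιF
def gK : Q := RingQuot.mkAlgHom ℂ QRel ιK
def gKi : Q := RingQuot.mkAlgHom ℂ QRel ιKi

section Gadgets

variable (k : Type) [Field k] (A : Type) [Ring A] [Algebra k A]

abbrev TP2 : Type := A ⊗[k] A
abbrev TP3 : Type := A ⊗[k] (A ⊗[k] A)
abbrev TP4 : Type := A ⊗[k] (A ⊗[k] (A ⊗[k] A))

/-- Multiplication `a ⊗ b ↦ a * b`. -/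
def mulA : TP2 k A →ₗ[k] A := LinearMap.mul' k A

/-- Tensor flip `a ⊗ b ↦ b ⊗ a`. -/
def flipA : TP2 k A →ₗ[k] TP2 k A := (TensorProduct.comm k A A).toLinearMap

/-- `a ↦ a ⊗ 1`. -/
def lTen : A →ₗ[k] TP2 k A := (TensorProduct.mk k A A).flip 1

/-- `a ↦ 1 ⊗ a`. -/
def rTen : A →ₗ[k] TP2 k A := TensorProduct.mk k A A 1

/-- `a ⊗ b ↦ a ⊗ b ⊗ 1`. -/
def emb12 : TP2 k A →ₗ[k] TP3 k A := TensorProduct.map LinearMap.id (lTen k A)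

/-- `a ⊗ b ↦ a ⊗ 1 ⊗ b`. -/
def emb13 : TP2 k A →ₗ[k] TP3 k A := TensorProduct.map LinearMap.id (rTen k A)

/-- `a ⊗ b ↦ 1 ⊗ a ⊗ b`. -/
def emb23 : TP2 k A →ₗ[k] TP3 k A := TensorProduct.mk k A (TP2 k A) 1

/-- `a ⊗ b ⊗ c ↦ a ⊗ c ⊗ b`. -/
def perm132 : TP3 k A →ₗ[k] TP3 k A := TensorProduct.map LinearMap.id (flipA k A)

/-- `a ⊗ b ⊗ c ↦ b ⊗ c ⊗ a`. -/
def perm231 : TP3 k A →ₗ[k] TP3 k A :=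
  (TensorProduct.assoc k A A A).toLinearMap ∘ₗ (TensorProduct.comm k A (TP2 k A)).toLinearMap

/-- `a ⊗ b ⊗ c ↦ c ⊗ a ⊗ b`. -/
def perm312 : TP3 k A →ₗ[k] TP3 k A :=
  (TensorProduct.comm k (TP2 k A) A).toLinearMap ∘ₗ (TensorProduct.assoc k A A A).symm.toLinearMap

/-- `a ⊗ b ⊗ c ↦ b ⊗ a ⊗ c`. -/
def perm213 : TP3 k A →ₗ[k] TP3 k A :=
  (TensorProduct.assoc k A A A).toLinearMap ∘ₗ
    (TensorProduct.map (flipA k A) LinearMap.id) ∘ₗ (TensorProduct.assoc k A A A).symm.toLinearMap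

variable {k A}

/-- `(Δ ⊗ id)` on two tensor factors, landing in the triple tensor product. -/
def copL (D : A →ₐ[k] TP2 k A) : TP2 k A →ₗ[k] TP3 k A :=
  (TensorProduct.assoc k A A A).toLinearMap ∘ₗ TensorProduct.map D.toLinearMap LinearMap.id

/-- `(id ⊗ Δ)` on two tensor factors. -/
def copR (D : A →ₐ[k] TP2 k A) : TP2 k A →ₗ[k] TP3 k A :=
  TensorProduct.map LinearMap.id D.toLinearMap

/-- `(ε ⊗ id) : A ⊗ A → A`. -/
def cuL (ce : A →ₐ[k] k) : TP2 k A →ₗ[k] A :=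
  (TensorProduct.lid k A).toLinearMap ∘ₗ TensorProduct.map ce.toLinearMap LinearMap.id

/-- `(id ⊗ ε) : A ⊗ A → A`. -/
def cuR (ce : A →ₐ[k] k) : TP2 k A →ₗ[k] A :=
  (TensorProduct.rid k A).toLinearMap ∘ₗ TensorProduct.map LinearMap.id ce.toLinearMap

/-- `(id ⊗ ε ⊗ id) : A ⊗ A ⊗ A → A ⊗ A`. -/
def cuMid (ce : A →ₐ[k] k) : TP3 k A →ₗ[k] TP2 k A :=
  TensorProduct.map LinearMap.id (cuL ce)

/-- `(Δ ⊗ id ⊗ id)`. -/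
def cop4_1 (D : A →ₐ[k] TP2 k A) : TP3 k A →ₗ[k] TP4 k A :=
  (TensorProduct.assoc k A A (TP2 k A)).toLinearMap ∘ₗ TensorProduct.map D.toLinearMap LinearMap.id

/-- `(id ⊗ Δ ⊗ id)`. -/
def cop4_2 (D : A →ₐ[k] TP2 k A) : TP3 k A →ₗ[k] TP4 k A :=
  TensorProduct.map LinearMap.id (copL D)

/-- `(id ⊗ id ⊗ Δ)`. -/
def cop4_3 (D : A →ₐ[k] TP2 k A) : TP3 k A →ₗ[k] TP4 k A :=
  TensorProduct.map LinearMap.id (copR D)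

/-- `a ⊗ b ⊗ c ↦ a ⊗ b ⊗ c ⊗ 1`, i.e. `Φ ↦ Φ ⊗ 1`. -/
def pad4 : TP3 k A →ₗ[k] TP4 k A :=
  TensorProduct.map LinearMap.id (TensorProduct.map LinearMap.id (lTen k A))

/-- `a ⊗ b ⊗ c ↦ f(a) * g(b) * h(c)`. -/
def tmap3 (f g h : A →ₗ[k] A) : TP3 k A →ₗ[k] A :=
  mulA k A ∘ₗ TensorProduct.map f (mulA k A ∘ₗ TensorProduct.map g h)

/-- `a ⊗ b ↦ S(a) * b`, used in the antipode axiom `m ∘ (S ⊗ id) ∘ Δ = 1·ε`. -/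
def antipL (s : A →ₗ[k] A) : TP2 k A →ₗ[k] A := mulA k A ∘ₗ TensorProduct.map s LinearMap.id

/-- `a ⊗ b ↦ a * S(b)`. -/
def antipR (s : A →ₗ[k] A) : TP2 k A →ₗ[k] A := mulA k A ∘ₗ TensorProduct.map LinearMap.id s

end Gadgets

/-- Central idempotent `e₀ = (1 + K²)/2`. -/
def e0 : Q := (2:ℂ)⁻¹ • (1 + gK ^ 2)

/-- Central idempotent `e₁ = (1 − K²)/2`. -/
def e1 : Q := (2:ℂ)⁻¹ • (1 - gK ^ 2)

/-- `f⁺ = −i F`. -/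
def fp : Q := (-Complex.I) • gF

/-- `f⁻ = E K⁻¹`. -/
def fm : Q := gE * gKi

/-- The Casimir element `C = FE − (i/4)(K − K⁻¹)`. -/
def Cas : Q := gF * gE - (Complex.I / 4) • (gK - gKi)

def t2 (a b : Q) : TP2 ℂ Q := a ⊗ₜ[ℂ] b

def t3 (a b c : Q) : TP3 ℂ Q := a ⊗ₜ[ℂ] (b ⊗ₜ[ℂ] c)

def eEF : Q := gE * gF
def eEK : Q := gE * gK
def eFK : Q := gF * gK
def eEFK : Q := gE * gF * gK

/-- `Φ^{010}` component of the coassociator. -/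
def Phi010 : TP3 ℂ Q :=
  t3 1 1 1 - (1 + Complex.I) • t3 gE gK gF + (1 - Complex.I) • t3 eFK gK eEK
    + (2:ℂ) • t3 eEFK 1 eEFK

/-- `Φ^{101}` component of the coassociator. -/
def Phi101 : TP3 ℂ Q :=
  (Complex.I - 1) • t3 1 gF eEK + t3 1 gK 1 + (2:ℂ) • t3 1 eEF eEFK
    - (1 + Complex.I) • t3 1 eEK gF - (1 + Complex.I) • t3 gE eFK 1
    + (2 * Complex.I) • t3 gE eEFK gF + (1 - Complex.I) • t3 eFK gE 1
    - (2 * Complex.I) • t3 eFK eEFK eEK - (2:ℂ) • t3 eEFK eEF 1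

/-- `Φ^{111}` component of the coassociator. -/
def Phi111 (β : ℂ) : TP3 ℂ Q :=
  (Complex.I * β ^ 2) • (
    (1 + Complex.I) • t3 1 gF eEK - t3 1 gK 1 - (2:ℂ) • t3 1 eEF 1
      - (2 * Complex.I) • t3 1 eEF eEFK + (1 + Complex.I) • t3 1 eEK gF
      - (1 + Complex.I) • t3 gE 1 gF + (1 + Complex.I) • t3 gE eFK 1
      + (2 * Complex.I) • t3 gE eFK eEFK + (2:ℂ) • t3 gE eEFK gF
      - (1 + Complex.I) • t3 eFK 1 eEK + (1 + Complex.I) • t3 eFK gE 1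
      + (2 * Complex.I) • t3 eFK gE eEFK + (2:ℂ) • t3 eFK eEFK eEK
      + (2 * Complex.I) • t3 eEFK gF eEK + (2 * Complex.I) • t3 eEFK gK eEFK
      - (2 * Complex.I) • t3 eEFK eEF 1 + (2 * Complex.I) • t3 eEFK eEK gF
      + (4:ℂ) • t3 eEFK eEF eEFK)

/-- The coassociator `Φ` of the quasi-Hopf algebra structure on `Q`. -/
def Phi (β : ℂ) : TP3 ℂ Q :=
  t3 e0 e0 e0 + t3 e1 e0 e0 + Phi010 * t3 e0 e1 e0 + t3 e0 e0 e1
    + t3 e1 e1 e0 + Phi101 * t3 e1 e0 e1 + t3 e0 e1 e1 + Phi111 β * t3 e1 e1 e1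

def R00 : TP2 ℂ Q :=
  (2:ℂ)⁻¹ • ((t2 1 1 + t2 1 gK + t2 gK 1 - t2 gK gK) * (t2 1 1 + (2 * Complex.I) • t2 gE gF))

def R01 : TP2 ℂ Q :=
  (2:ℂ)⁻¹ • ((t2 1 1 - Complex.I • t2 1 gK + t2 gK 1 + Complex.I • t2 gK gK) *
    (t2 1 1 + (1 - Complex.I) • t2 eFK eEK - (1 - Complex.I) • t2 gE gF
      + (1 + Complex.I) • t2 eEFK 1 + (2 * Complex.I) • t2 eEFK eEFK))

def R10 : TP2 ℂ Q :=
  (2:ℂ)⁻¹ • ((t2 1 1 + t2 1 gK - Complex.I • t2 gK 1 + Complex.I • t2 gK gK) *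
    (t2 1 gK + (1 - Complex.I) • t2 eFK gE + (1 - Complex.I) • t2 gE eFK
      - (1 - Complex.I) • t2 1 eEF - (2 * Complex.I) • t2 eEFK eEF))

def R11 (β : ℂ) : TP2 ℂ Q :=
  (β / 2) • ((t2 1 1 - Complex.I • t2 1 gK - Complex.I • t2 gK 1 + t2 gK gK) *
    ((-Complex.I) • t2 gK 1 + (2 * Complex.I) • t2 eEK gF + (1 - Complex.I) • t2 gK eEFK
      - (1 + Complex.I) • t2 eEF 1 - (2 * Complex.I) • t2 eEF eEFK))

/-- The universal R-matrix `R` of the quasi-triangular quasi-Hopf structure on `Q`. -/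
def Rmat (β : ℂ) : TP2 ℂ Q :=
  R00 * t2 e0 e0 + R01 * t2 e0 e1 + R10 * t2 e1 e0 + R11 β * t2 e1 e1

/-- The standard R-matrix `R_st` of the quotient `Q/(K²-1)`. -/
def Rst : TP2 ℂ Q :=
  (2:ℂ)⁻¹ • ∑ m ∈ Finset.range 2, ∑ n ∈ Finset.range 2,
    ((-1:ℂ) ^ (m * n)) • (t2 (gK ^ m) (gK ^ n) * (t2 1 1 + (2 * Complex.I) • t2 gE gF))

/-- The monodromy matrix `M = R₂₁ · R`. -/
def Mmat (β : ℂ) : TP2 ℂ Q := flipA ℂ Q (Rmat β) * Rmat β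

/-- The ribbon element `v = (e₀ − iβ K e₁)(1 − 2 f⁺ f⁻)`. -/
def vRib (β : ℂ) : Q := (e0 - (Complex.I * β) • (gK * e1)) * (1 - (2:ℂ) • (fp * fm))

/-- The coevaluation element `β = e₀ − 2iβ² C e₁`. -/
def bbEl (β : ℂ) : Q := e0 - (2 * Complex.I * β ^ 2) • (Cas * e1)

/-- `b ⊗ c ↦ S(b · bb · S(c))`, inner part of the Drinfeld element. -/
def uInner (S : Q →ₗ[ℂ] Q) (bb : Q) : TP2 ℂ Q →ₗ[ℂ] Q :=
  S ∘ₗ mulA ℂ Q ∘ₗ TensorProduct.map (LinearMap.mulRight ℂ bb) S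

/-- `Φ' ⊗ Φ'' ⊗ Φ''' ↦ S(Φ'' · bb · S(Φ''')) ⊗ Φ'`. -/
def uMap1 (S : Q →ₗ[ℂ] Q) (bb : Q) : TP3 ℂ Q →ₗ[ℂ] TP2 ℂ Q :=
  TensorProduct.map (uInner S bb) LinearMap.id ∘ₗ (TensorProduct.comm ℂ Q (TP2 ℂ Q)).toLinearMap

/-- `R' ⊗ R'' ↦ S(R'') · al · R'`. -/
def uMap2 (S : Q →ₗ[ℂ] Q) (al : Q) : TP2 ℂ Q →ₗ[ℂ] Q :=
  mulA ℂ Q ∘ₗ TensorProduct.map (LinearMap.mulRight ℂ al ∘ₗ S) LinearMap.id ∘ₗ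
    (TensorProduct.comm ℂ Q Q).toLinearMap

/-- `(x ⊗ a) ⊗ (R' ⊗ R'') ↦ x · (S(R'') · al · R') · a`. -/
def uBig (S : Q →ₗ[ℂ] Q) (al : Q) : TP2 ℂ Q ⊗[ℂ] TP2 ℂ Q →ₗ[ℂ] Q :=
  mulA ℂ Q ∘ₗ TensorProduct.map LinearMap.id (mulA ℂ Q ∘ₗ (TensorProduct.comm ℂ Q Q).toLinearMap)
    ∘ₗ (TensorProduct.assoc ℂ Q Q Q).toLinearMap ∘ₗ TensorProduct.map LinearMap.id (uMap2 S al)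

/-- The Drinfeld element `u = Σ S(Φ''·b·S(Φ'''))·S(R'')·α·R'·Φ'` (with `α = 1`). -/
def uDrin (β : ℂ) (S : Q →ₗ[ℂ] Q) : Q :=
  uBig S 1 (uMap1 S (bbEl β) (Phi β) ⊗ₜ[ℂ] Rmat β)

/-- The balancing element `g = b · S(α) · v⁻¹ · u` (with `α = 1`). -/
def balG (β : ℂ) (S : Q →ₗ[ℂ] Q) : Q :=
  bbEl β * S 1 * Ring.inverse (vRib β) * uDrin β S

/-- The cointegral `c = (β²/i)·E·F·(1 + K + K² + K³)`. -/
def cInt (β : ℂ) : Q := (β ^ 2 / Complex.I) • (gE * gF * (1 + gK + gK ^ 2 + gK ^ 3))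

/-- The q-trace of a one-dimensional representation, with balancing element `K⁻¹`. -/
def qTr1 (ρ : Q →ₐ[ℂ] ℂ) : Q →ₗ[ℂ] ℂ := ρ.toLinearMap ∘ₗ LinearMap.mulLeft ℂ gK

/-- The q-trace of a two-dimensional (matrix) representation, with balancing element `K⁻¹`. -/
def qTrM (ρ : Q →ₐ[ℂ] Matrix (Fin 2) (Fin 2) ℂ) : Q →ₗ[ℂ] ℂ :=
  Matrix.traceLinearMap (Fin 2) ℂ ℂ ∘ₗ ρ.toLinearMap ∘ₗ LinearMap.mulLeft ℂ gK

/-- The Drinfeld mapping `φ ↦ (φ ⊗ id)(M)`. -/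
def drinfeldImg (β : ℂ) (φ : Q →ₗ[ℂ] ℂ) : Q :=
  (TensorProduct.lid ℂ Q) (TensorProduct.map φ LinearMap.id (Mmat β))

/-!
`K²` is central with square `1`, so `Q` is the product of the blocks `Q e₀` and `Q e₁`, on which
`K² = 1` and `K² = -1`. An antipode fixes `e₀`, `e₁` and `b`, so in the contraction defining `u`
they can be moved out of every tensor factor: only the component `R⁰⁰` of `R` and the trivial one of
`Φ` contribute on `Q e₀`, only `R¹¹` and `Φ¹¹¹` on `Q e₁`, and `b` factors out. With
`T = 1 - 2 f⁺ f⁻` the remaining factors are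

* on `Q e₀`: `b = 1`, `v = T`, `u = K T`;
* on `Q e₁`: `b = -β² K T`, `v = -iβ K T`, `u = β⁵ K`, where `T² = 1`.

Comparing blocks gives `b u = v K (e₀ - iβ⁶ e₁)`, and cancelling the unit `v` leaves
`g = K (e₀ - iβ⁶ e₁)`. Finally `K (e₀ + e₁) = K` and `K (e₀ - e₁) = K³ = K⁻¹`.
-/

/-! ### The relations of `Q` -/

/-
Unification at reducible transparency does not identify the operations of `RingQuot` with those
of its ring structure, so `simp` cannot use `neg_mul`, `mul_neg` and `neg_smul` on `Q`.
-/
protected lemma Q.neg_mul (x y : Q) : -x * y = -(x * y) := _root_.neg_mul x y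
protected lemma Q.mul_neg (x y : Q) : x * -y = -(x * y) := _root_.mul_neg x y
protected lemma Q.neg_smul (c : ℂ) (x : Q) : (-c) • x = -(c • x) := _root_.neg_smul c x

lemma gK_mul_gKi : gK * gKi = 1 := by
  simpa [gK, gKi] using RingQuot.mkAlgHom_rel ℂ QRel.KKi

lemma gKi_mul_gK : gKi * gK = 1 := by
  simpa [gK, gKi] using RingQuot.mkAlgHom_rel ℂ QRel.KiK

lemma gK_pow_four : gK ^ 4 = 1 := by
  simpa [gK] using RingQuot.mkAlgHom_rel ℂ QRel.K4

lemma gE_mul_gE : gE * gE = 0 := by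
  simpa [gE, pow_two] using RingQuot.mkAlgHom_rel ℂ QRel.Esq

lemma gF_mul_gF : gF * gF = 0 := by
  simpa [gF, pow_two] using RingQuot.mkAlgHom_rel ℂ QRel.Fsq

lemma gK_mul_eq_neg_of_conj {x : Q} (h : gK * x * gKi = -x) : gK * x = -(x * gK) :=
  calc gK * x = gK * x * gKi * gK := by rw [mul_assoc, gKi_mul_gK, mul_one]
    _ = -(x * gK) := by rw [h, Q.neg_mul]

lemma gK_mul_gE : gK * gE = -(gE * gK) :=
  gK_mul_eq_neg_of_conj (by simpa [gK, gE, gKi] using RingQuot.mkAlgHom_rel ℂ QRel.KEKi)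

lemma gK_mul_gF : gK * gF = -(gF * gK) :=
  gK_mul_eq_neg_of_conj (by simpa [gK, gF, gKi] using RingQuot.mkAlgHom_rel ℂ QRel.KFKi)

lemma gF_mul_gE : gF * gE = gE * gF + (Complex.I / 2) • (gK - gKi) := by
  have commutator : gE * gF - gF * gE = (2 * Complex.I)⁻¹ • (gK - gKi) := by
    have h := RingQuot.mkAlgHom_rel ℂ QRel.EF
    rwa [map_smul, map_sub, map_sub, map_mul, map_mul] at h
  have inv_two_I : (2 * Complex.I)⁻¹ = -(Complex.I / 2) := by
    rw [mul_inv, Complex.inv_I]; ring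
  rw [inv_two_I, Q.neg_smul] at commutator
  rw [← sub_eq_iff_eq_add', ← neg_sub, commutator, neg_neg]

lemma gKi_eq : gKi = gK * (gK * gK) :=
  calc gKi = gKi * gK ^ 4 := by rw [gK_pow_four, mul_one]
    _ = gKi * gK * (gK * (gK * gK)) := by simp only [pow_succ, pow_zero, one_mul, mul_assoc]
    _ = gK * (gK * gK) := by rw [gKi_mul_gK, one_mul]

/-
Used from left to right, the product rules below bring a word in the generators to a combination of
the basis vectors `E ^ a * F ^ b * K ^ c`.
-/
lemma gE_mul_gE_mul (x : Q) : gE * (gE * x) = 0 := by rw [← mul_assoc, gE_mul_gE, zero_mul]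

lemma gF_mul_gF_mul (x : Q) : gF * (gF * x) = 0 := by rw [← mul_assoc, gF_mul_gF, zero_mul]

lemma gK_mul_gE_mul (x : Q) : gK * (gE * x) = -(gE * (gK * x)) := by
  rw [← mul_assoc, gK_mul_gE, Q.neg_mul, mul_assoc]

lemma gK_mul_gF_mul (x : Q) : gK * (gF * x) = -(gF * (gK * x)) := by
  rw [← mul_assoc, gK_mul_gF, Q.neg_mul, mul_assoc]

lemma gKi_mul (x : Q) : gKi * x = gK * (gK * (gK * x)) := by
  rw [gKi_eq, mul_assoc, mul_assoc]

lemma gF_mul_gE_mul (x : Q) :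
    gF * (gE * x) = gE * (gF * x) + (Complex.I / 2) • (gK * x - gKi * x) := by
  rw [← mul_assoc, gF_mul_gE, add_mul, smul_mul_assoc, sub_mul, mul_assoc]

lemma gK_pow_four_mul (x : Q) : gK * (gK * (gK * (gK * x))) = x := by
  rw [← gKi_mul, ← mul_assoc, gKi_mul_gK, one_mul]

lemma gK_pow_four_right : gK * (gK * (gK * gK)) = 1 := by
  rw [← gKi_eq, gK_mul_gKi]

lemma commute_of_commute_generators {z : Q} (hE : Commute z gE) (hF : Commute z gF)
    (hK : Commute z gK) (x : Q) : Commute z x := by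
  obtain ⟨x, rfl⟩ := RingQuot.mkAlgHom_surjective ℂ QRel x
  induction x using FreeAlgebra.induction with
  | grade0 c => rw [AlgHom.commutes]; exact Algebra.commute_algebraMap_right c z
  | grade1 g =>
    cases g with
    | E => exact hE
    | F => exact hF
    | K => exact hK
    | Kinv =>
      change Commute z gKi
      rw [gKi_eq]
      exact hK.mul_right (hK.mul_right hK)
  | mul a b ha hb => rw [map_mul]; exact ha.mul_right hb
  | add a b ha hb => rw [map_add]; exact ha.add_right hb

/-! ### The two blocks `Q e₀` and `Q e₁` -/

lemma commute_gK_sq (x : Q) : Commute (gK ^ 2) x := by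
  apply commute_of_commute_generators
  · simp only [Commute, SemiconjBy, pow_two, mul_assoc, gK_mul_gE, gK_mul_gE_mul, Q.mul_neg,
      neg_neg]
  · simp only [Commute, SemiconjBy, pow_two, mul_assoc, gK_mul_gF, gK_mul_gF_mul, Q.mul_neg,
      neg_neg]
  · exact (Commute.refl gK).pow_left 2

lemma commute_e0 (x : Q) : Commute e0 x :=
  ((Commute.one_left x).add_left (commute_gK_sq x)).smul_left _

lemma commute_e1 (x : Q) : Commute e1 x :=
  ((Commute.one_left x).sub_left (commute_gK_sq x)).smul_left _

lemma gK_mul_gK_mul_e0 : gK * (gK * e0) = e0 := by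
  simp only [e0, mul_smul_comm, pow_two, mul_add, mul_one, gK_pow_four_right, add_comm]

lemma gK_mul_gK_mul_e1 : gK * (gK * e1) = -e1 := by
  simp only [e1, mul_smul_comm, pow_two, mul_sub, mul_one, gK_pow_four_right]
  module

lemma e0_add_e1 : e0 + e1 = 1 := by
  simp only [e0, e1]; module

lemma e1_mul_e1 : e1 * e1 = e1 :=
  calc e1 * e1 = (2:ℂ)⁻¹ • (e1 - gK * (gK * e1)) := by
        conv_lhs => enter [1]; rw [e1]
        rw [smul_mul_assoc, sub_mul, one_mul, pow_two, mul_assoc]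
    _ = e1 := by rw [gK_mul_gK_mul_e1]; module

lemma e0_mul_e1 : e0 * e1 = 0 := by
  rw [eq_sub_of_add_eq e0_add_e1, sub_mul, one_mul, e1_mul_e1, sub_self]

lemma e1_mul_e0 : e1 * e0 = 0 := by
  rw [(commute_e1 e0).eq, e0_mul_e1]

lemma e0_mul_e0 : e0 * e0 = e0 := by
  rw [← add_zero (e0 * e0), ← e0_mul_e1, ← mul_add, e0_add_e1, mul_one]

lemma eq_of_mul_e0_of_mul_e1 {x y : Q} (h0 : x * e0 = y * e0) (h1 : x * e1 = y * e1) : x = y := by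
  rw [← mul_one x, ← mul_one y, ← e0_add_e1, mul_add, mul_add, h0, h1]

lemma gKi_mul_e0 : gKi * e0 = gK * e0 := by
  rw [gKi_mul, gK_mul_gK_mul_e0]

lemma gKi_mul_e1 : gKi * e1 = -(gK * e1) := by
  rw [gKi_mul, gK_mul_gK_mul_e1, Q.mul_neg]

lemma gK_mul_e0_sub_e1 : gK * (e0 - e1) = gKi := by
  rw [mul_sub, ← gKi_mul_e0, ← neg_eq_iff_eq_neg.mpr gKi_mul_e1, sub_neg_eq_add, ← mul_add,
    e0_add_e1, mul_one]

/-! ### The ribbon element, the Casimir element and the element `b` -/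

/-- The factor `1 − 2 f⁺ f⁻` of the ribbon element. It is unipotent on `Q e₀` and an involution on
`Q e₁`, where it is also the factor relating the Casimir element to `K`. -/
def ribbonFactor : Q := 1 - (2:ℂ) • (fp * fm)

lemma ribbonFactor_mul (x : Q) :
    ribbonFactor * x = gK * (gK * x) + (2 * Complex.I) • (gE * (gF * (gKi * x))) := by
  simp only [ribbonFactor, fp, fm, sub_mul, add_mul, one_mul, smul_mul_assoc, mul_assoc,
    gF_mul_gE_mul, gKi_mul, gK_pow_four_mul]
  match_scalars <;> grind [Complex.I_sq]

lemma ribbonFactor_mul_e0 :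
    ribbonFactor * e0 = e0 + (2 * Complex.I) • (gE * (gF * (gK * e0))) := by
  rw [ribbonFactor_mul, gK_mul_gK_mul_e0, gKi_mul_e0]

lemma ribbonFactor_mul_e1 :
    ribbonFactor * e1 = -(e1 + (2 * Complex.I) • (gE * (gF * (gK * e1)))) := by
  rw [ribbonFactor_mul, gK_mul_gK_mul_e1, gKi_mul_e1, Q.mul_neg, Q.mul_neg]
  module

lemma ribbonFactor_mul_gK_mul (x : Q) : ribbonFactor * (gK * x) = gK * (ribbonFactor * x) := by
  simp only [ribbonFactor_mul, gKi_mul, mul_add, mul_smul_comm, gK_mul_gE_mul, gK_mul_gF_mul,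
    Q.mul_neg, neg_neg]

lemma ribbonFactor_sq_mul_e0 :
    ribbonFactor * (ribbonFactor * e0) = (2:ℂ) • (ribbonFactor * e0) - e0 := by
  simp only [ribbonFactor_mul, mul_add, mul_sub, mul_smul_comm, gF_mul_gE_mul, gK_mul_gE_mul,
    gK_mul_gF_mul, gKi_mul, gK_mul_gK_mul_e0, gE_mul_gE_mul, gF_mul_gF_mul, Q.mul_neg]
  module

lemma ribbonFactor_sq_mul_e1 : ribbonFactor * (ribbonFactor * e1) = e1 := by
  simp only [ribbonFactor_mul, mul_add, mul_sub, mul_smul_comm, gF_mul_gE_mul, gK_mul_gE_mul,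
    gK_mul_gF_mul, gKi_mul, gK_mul_gK_mul_e1, gE_mul_gE_mul, gF_mul_gF_mul, Q.mul_neg]
  match_scalars <;> grind [Complex.I_sq]

lemma isUnit_ribbonFactor : IsUnit ribbonFactor := by
  have commute_blockwise :
      Commute ribbonFactor (((2:ℂ) • 1 - ribbonFactor) * e0 + ribbonFactor * e1) := by
    refine Commute.add_right (Commute.mul_right ?_ (commute_e0 _).symm)
      (Commute.mul_right (Commute.refl _) (commute_e1 _).symm)
    exact ((Commute.one_right _).smul_right _).sub_right (Commute.refl _)
  refine (commute_blockwise.isUnit_mul_iff.mp ?_).1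
  rw [mul_add, ribbonFactor_sq_mul_e1, sub_mul, mul_sub, ribbonFactor_sq_mul_e0, smul_mul_assoc,
    mul_smul_comm, one_mul, sub_sub_cancel, e0_add_e1]
  exact isUnit_one

lemma e0_sub_smul_mul_e0_sub_smul (a b : ℂ) :
    (e0 - a • (gK * e1)) * (e0 - b • (gK * e1)) = e0 - (a * b) • e1 := by
  have e1_gK_e1 : e1 * (gK * e1) = gK * e1 := by
    rw [(commute_e1 gK).left_comm, e1_mul_e1]
  have e0_gK_e1 : e0 * (gK * e1) = 0 := by
    rw [(commute_e0 gK).left_comm, e0_mul_e1, mul_zero]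
  rw [sub_mul, mul_sub, mul_sub, e0_mul_e0, mul_smul_comm, e0_gK_e1, smul_mul_assoc, mul_assoc,
    e1_mul_e0, mul_zero, smul_mul_assoc, mul_smul_comm, mul_assoc, e1_gK_e1, gK_mul_gK_mul_e1]
  module

lemma isUnit_e0_sub_smul {c : ℂ} (hc : c ≠ 0) : IsUnit (e0 - c • (gK * e1)) := by
  refine ⟨⟨_, e0 - (-c⁻¹) • (gK * e1), ?_, ?_⟩, rfl⟩ <;>
    rw [e0_sub_smul_mul_e0_sub_smul, ← e0_add_e1]
  · rw [mul_neg, mul_inv_cancel₀ hc]; module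
  · rw [neg_mul, inv_mul_cancel₀ hc]; module

lemma vRib_eq (β : ℂ) : vRib β = (e0 - (Complex.I * β) • (gK * e1)) * ribbonFactor := rfl

lemma isUnit_vRib {β : ℂ} (hβ : β ≠ 0) : IsUnit (vRib β) :=
  (isUnit_e0_sub_smul (mul_ne_zero Complex.I_ne_zero hβ)).mul isUnit_ribbonFactor

lemma vRib_mul_e0 (β : ℂ) : vRib β * e0 = ribbonFactor * e0 := by
  simp only [vRib_eq, mul_assoc, ← (commute_e0 ribbonFactor).eq, sub_mul, smul_mul_assoc]
  rw [← mul_assoc e0, ← mul_assoc e1, e0_mul_e0, e1_mul_e0, zero_mul, mul_zero, smul_zero, sub_zero]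

lemma vRib_mul_e1 (β : ℂ) :
    vRib β * e1 = -((Complex.I * β) • (gK * (ribbonFactor * e1))) := by
  simp only [vRib_eq, mul_assoc, ← (commute_e1 ribbonFactor).eq, sub_mul, smul_mul_assoc]
  rw [← mul_assoc e0, ← mul_assoc e1, e1_mul_e1, e0_mul_e1, zero_mul, zero_sub]

lemma vRib_mul_gK_mul_e0 (β : ℂ) : vRib β * (gK * e0) = gK * (ribbonFactor * e0) := by
  rw [← (commute_e0 gK).eq, ← mul_assoc, vRib_mul_e0, mul_assoc, (commute_e0 gK).eq,
    ribbonFactor_mul_gK_mul]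

lemma vRib_mul_gK_mul_e1 (β : ℂ) :
    vRib β * (gK * e1) = (Complex.I * β) • (ribbonFactor * e1) := by
  rw [← (commute_e1 gK).eq, ← mul_assoc, vRib_mul_e1, Q.neg_mul, smul_mul_assoc, mul_assoc,
    mul_assoc, (commute_e1 gK).eq, ← ribbonFactor_mul_gK_mul, gK_mul_gK_mul_e1, Q.mul_neg, smul_neg,
    neg_neg]

lemma Cas_mul_e1 : Cas * e1 = -((Complex.I / 2) • (gK * (ribbonFactor * e1))) := by
  simp only [Cas, ribbonFactor_mul_e1, sub_mul, mul_add, smul_mul_assoc, mul_smul_comm, mul_assoc,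
    gF_mul_gE_mul, gK_mul_gE_mul, gK_mul_gF_mul, gKi_mul, gK_mul_gK_mul_e1, Q.mul_neg]
  match_scalars <;> grind [Complex.I_sq]

lemma commute_Cas (x : Q) : Commute Cas x := by
  apply commute_of_commute_generators
  · simp only [Cas, Commute, SemiconjBy, mul_sub, sub_mul, mul_add, add_mul, mul_smul_comm,
      smul_mul_assoc, mul_assoc, gF_mul_gE, gE_mul_gE_mul, gK_mul_gE, gK_mul_gE_mul,
      gKi_eq, Q.mul_neg]
    match_scalars <;> ring
  · simp only [Cas, Commute, SemiconjBy, mul_sub, sub_mul, mul_add, add_mul, mul_smul_comm,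
      smul_mul_assoc, mul_assoc, gF_mul_gE, gF_mul_gE_mul, gF_mul_gF, gK_mul_gF, gK_mul_gF_mul,
      gKi_eq, Q.mul_neg, mul_zero]
    match_scalars <;> ring
  · simp only [Cas, Commute, SemiconjBy, mul_sub, sub_mul, mul_smul_comm, smul_mul_assoc,
      mul_assoc, gK_mul_gE, gK_mul_gF_mul, gK_mul_gKi, gKi_mul_gK, Q.mul_neg, neg_neg]

lemma commute_bbEl (β : ℂ) (x : Q) : Commute (bbEl β) x :=
  (commute_e0 x).sub_left (((commute_Cas x).mul_left (commute_e1 x)).smul_left _)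

lemma bbEl_mul_e0 (β : ℂ) : bbEl β * e0 = e0 := by
  rw [bbEl, sub_mul, e0_mul_e0, smul_mul_assoc, mul_assoc Cas, e1_mul_e0, mul_zero, smul_zero,
    sub_zero]

lemma bbEl_mul_e1 (β : ℂ) : bbEl β * e1 = -(β ^ 2 • (gK * (ribbonFactor * e1))) := by
  rw [bbEl, sub_mul, e0_mul_e1, smul_mul_assoc, mul_assoc Cas, e1_mul_e1, Cas_mul_e1]
  match_scalars
  linear_combination β ^ 2 * Complex.I_sq

/-! ### Contractions along an antipode -/

/-- The antipode of `Q`, described by its antimultiplicativity and its values on the generators. -/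
structure IsAntipode (S : Q →ₗ[ℂ] Q) : Prop where
  map_one : S 1 = 1
  map_mul (a b : Q) : S (a * b) = S b * S a
  map_gE : S gE = -(gE * gKi)
  map_gF : S gF = -(gK * gF)
  map_gK : S gK = gKi

/-- Central elements fixed by `S`: these are the elements that every contraction below lets through
unchanged, whichever tensor factor they sit in. -/
structure IsCentralFixed (S : Q →ₗ[ℂ] Q) (z : Q) : Prop where
  commute (w : Q) : Commute z w
  map_eq : S z = z

/-- The map `a ⊗ b ⊗ c ↦ S(S(c)) · S(b) · p · a`, which computes the Drinfeld element from the
coassociator once the `R`-matrix has been contracted to `p`. -/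
def uContract (S : Q →ₗ[ℂ] Q) (p : Q) : TP3 ℂ Q →ₗ[ℂ] Q :=
  mulA ℂ Q ∘ₗ TensorProduct.map LinearMap.id (LinearMap.mulLeft ℂ p) ∘ₗ uMap1 S 1

lemma t2_mul_t2 (a b c d : Q) : t2 a b * t2 c d = t2 (a * c) (b * d) :=
  Algebra.TensorProduct.tmul_mul_tmul a c b d

lemma t3_mul_t3 (a b c x y z : Q) : t3 a b c * t3 x y z = t3 (a * x) (b * y) (c * z) := by
  simp only [t3, Algebra.TensorProduct.tmul_mul_tmul]

lemma t2_induction {P : TP2 ℂ Q → Prop} (X : TP2 ℂ Q) (zero : P 0) (t2 : ∀ a b, P (t2 a b))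
    (add : ∀ X Y, P X → P Y → P (X + Y)) : P X :=
  TensorProduct.induction_on X zero t2 add

lemma t3_induction {P : TP3 ℂ Q → Prop} (X : TP3 ℂ Q) (zero : P 0) (t3 : ∀ a b c, P (t3 a b c))
    (add : ∀ X Y, P X → P Y → P (X + Y)) : P X := by
  induction X using TensorProduct.induction_on with
  | zero => exact zero
  | add X Y hX hY => exact add X Y hX hY
  | tmul a B =>
    induction B using t2_induction with
    | zero => rwa [tmul_zero]
    | add X Y hX hY => rw [tmul_add]; exact add _ _ hX hY
    | t2 b c => exact t3 a b c

section Contractions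

variable {S : Q →ₗ[ℂ] Q}

lemma uMap2_t2 (al a b : Q) : uMap2 S al (t2 a b) = S b * al * a := by
  simp [uMap2, t2, mulA]

lemma uMap2_mul (hS : ∀ a b, S (a * b) = S b * S a) (al : Q) (X Y : TP2 ℂ Q) :
    uMap2 S al (X * Y) = uMap2 S (uMap2 S al X) Y := by
  induction Y using t2_induction with
  | zero => simp
  | add Y Y' hY hY' => rw [mul_add, map_add, map_add, hY, hY']
  | t2 c d =>
    induction X using t2_induction with
    | zero => simp [uMap2_t2]
    | add X X' hX hX' =>
      rw [add_mul, map_add, map_add, hX, hX']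
      simp only [uMap2_t2, mul_add, add_mul]
    | t2 a b => simp only [t2_mul_t2, uMap2_t2, hS, mul_assoc]

lemma uMap2_mul_t2 (hS : ∀ a b, S (a * b) = S b * S a) (al x : Q) {y : Q}
    (hy : IsCentralFixed S y) (X : TP2 ℂ Q) :
    uMap2 S al (X * t2 x y) = uMap2 S al X * (x * y) := by
  rw [uMap2_mul hS, uMap2_t2, hy.map_eq, mul_assoc, (hy.commute _).eq, mul_assoc]

lemma uMap2_mul_left (al : Q) {z : Q} (hz : ∀ w, Commute z w) (X : TP2 ℂ Q) :
    uMap2 S (al * z) X = uMap2 S al X * z := by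
  induction X using t2_induction with
  | zero => simp
  | add X Y hX hY => rw [map_add, map_add, add_mul, hX, hY]
  | t2 a b => simp only [uMap2_t2, mul_assoc, (hz a).eq]

lemma uContract_t3 (hS : ∀ a b, S (a * b) = S b * S a) (p a b c : Q) :
    uContract S p (t3 a b c) = S (S c) * (S b * (p * a)) := by
  simp [uContract, uMap1, uInner, t3, mulA, hS, mul_assoc]

lemma uContract_t3_of_isCentralFixed (hS : ∀ a b, S (a * b) = S b * S a) (p x : Q) {y z : Q}
    (hy : IsCentralFixed S y) (hz : IsCentralFixed S z) :
    uContract S p (t3 x y z) = p * (x * (y * z)) := by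
  rw [uContract_t3 hS, hz.map_eq, hz.map_eq, hy.map_eq, (hz.commute _).eq, (hy.commute _).eq]
  simp only [mul_assoc]

lemma uContract_mul_t3 (hS : ∀ a b, S (a * b) = S b * S a) (p x : Q) {y z : Q}
    (hy : IsCentralFixed S y) (hz : IsCentralFixed S z) (X : TP3 ℂ Q) :
    uContract S p (X * t3 x y z) = uContract S p X * (x * (y * z)) := by
  induction X using t3_induction with
  | zero => simp
  | add X Y hX hY => rw [add_mul, map_add, map_add, add_mul, hX, hY]
  | t3 a b c =>
    rw [t3_mul_t3, uContract_t3 hS, uContract_t3 hS, hS, hS, hz.map_eq, hS, hy.map_eq, hz.map_eq,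
      mul_assoc, (hz.commute _).eq, mul_assoc y, (hy.commute _).eq]
    simp only [mul_assoc]

lemma uContract_mul_left (hS : ∀ a b, S (a * b) = S b * S a) (p : Q) {z : Q}
    (hz : ∀ w, Commute z w) (X : TP3 ℂ Q) : uContract S (p * z) X = uContract S p X * z := by
  induction X using t3_induction with
  | zero => simp
  | add X Y hX hY => rw [map_add, map_add, add_mul, hX, hY]
  | t3 a b c => simp only [uContract_t3 hS, mul_assoc, (hz a).eq]

lemma uBig_uMap1_tmul (hS : ∀ a b, S (a * b) = S b * S a) (al : Q) {bb : Q}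
    (hbb : IsCentralFixed S bb) (X : TP3 ℂ Q) (Y : TP2 ℂ Q) :
    uBig S al (uMap1 S bb X ⊗ₜ[ℂ] Y) = bb * uContract S (uMap2 S al Y) X := by
  induction X using t3_induction with
  | zero => simp
  | add X X' hX hX' => rw [map_add, add_tmul, map_add, map_add, mul_add, hX, hX']
  | t3 a b c =>
    rw [uContract_t3 hS, (hbb.commute _).eq]
    simp [uBig, uMap1, uInner, t3, mulA, hS, hbb.map_eq, mul_assoc, (hbb.commute _).eq]

end Contractions

namespace IsAntipode

variable {S : Q →ₗ[ℂ] Q}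

lemma map_gKi (hS : IsAntipode S) : S gKi = gK :=
  calc S gKi = S gKi * S gK * gK := by rw [hS.map_gK, mul_assoc, gKi_mul_gK, mul_one]
    _ = gK := by rw [← hS.map_mul, gK_mul_gKi, hS.map_one, one_mul]

lemma map_eFK (hS : IsAntipode S) : S eFK = -gF := by
  rw [eFK, hS.map_mul, hS.map_gK, hS.map_gF, Q.mul_neg, ← mul_assoc, gKi_mul_gK, one_mul]

lemma map_eEF (hS : IsAntipode S) : S eEF = gF * gE := by
  rw [eEF, hS.map_mul, hS.map_gE, hS.map_gF, Q.neg_mul, Q.mul_neg, neg_neg, mul_assoc,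
    gK_mul_gF_mul, gK_mul_gE_mul, gK_mul_gKi, Q.mul_neg, neg_neg, mul_one]

lemma map_eEK (hS : IsAntipode S) : S eEK = gE * (gK * gK) := by
  simp only [eEK, hS.map_mul, hS.map_gE, hS.map_gK, gKi_mul, gK_mul_gE_mul, gK_mul_gE,
    gK_mul_gKi, mul_one, Q.mul_neg, neg_neg]

lemma map_eEFK (hS : IsAntipode S) : S eEFK = gF * (gE * gKi) := by
  simp only [eEFK, hS.map_mul, hS.map_gE, hS.map_gF, hS.map_gK, Q.neg_mul, Q.mul_neg, neg_neg,
    mul_assoc, gKi_mul, gK_pow_four_mul]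

lemma map_map_gE (hS : IsAntipode S) : S (S gE) = -gE := by
  rw [hS.map_gE, map_neg, hS.map_mul, hS.map_gE, hS.map_gKi, Q.mul_neg, neg_neg, gK_mul_gE_mul,
    gK_mul_gKi, mul_one]

lemma map_map_gF (hS : IsAntipode S) : S (S gF) = -gF := by
  rw [hS.map_gF, map_neg, hS.map_mul, hS.map_gF, hS.map_gK, Q.neg_mul, neg_neg, mul_assoc,
    gK_mul_gF_mul, gK_mul_gKi, mul_one]

lemma map_map_gK (hS : IsAntipode S) : S (S gK) = gK := by
  rw [hS.map_gK, hS.map_gKi]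

lemma map_map_mul (hS : IsAntipode S) (a b : Q) : S (S (a * b)) = S (S a) * S (S b) := by
  rw [hS.map_mul, hS.map_mul]

lemma map_map_eEK (hS : IsAntipode S) : S (S eEK) = -eEK := by
  rw [eEK, hS.map_map_mul, hS.map_map_gE, hS.map_map_gK, Q.neg_mul]

lemma map_map_eEFK (hS : IsAntipode S) : S (S eEFK) = eEFK := by
  rw [eEFK, hS.map_map_mul, hS.map_map_mul, hS.map_map_gE, hS.map_map_gF, hS.map_map_gK, Q.neg_mul,
    Q.mul_neg, neg_neg]

lemma map_gK_sq (hS : IsAntipode S) : S (gK ^ 2) = gK ^ 2 := by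
  simp only [pow_two, hS.map_mul, hS.map_gK, gKi_eq, mul_assoc, gK_pow_four_mul]

lemma isCentralFixed_e0 (hS : IsAntipode S) : IsCentralFixed S e0 :=
  ⟨commute_e0, by rw [e0, map_smul, map_add, hS.map_one, hS.map_gK_sq]⟩

lemma isCentralFixed_e1 (hS : IsAntipode S) : IsCentralFixed S e1 :=
  ⟨commute_e1, by rw [e1, map_smul, map_sub, hS.map_one, hS.map_gK_sq]⟩

lemma map_Cas (hS : IsAntipode S) : S Cas = Cas := by
  simp only [Cas, map_sub, map_smul, hS.map_mul, hS.map_gE, hS.map_gF, hS.map_gK, hS.map_gKi,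
    Q.neg_mul, Q.mul_neg, neg_neg, mul_assoc]
  rw [← mul_assoc gKi, gKi_mul_gK, one_mul, gF_mul_gE]
  module

lemma isCentralFixed_bbEl (hS : IsAntipode S) (β : ℂ) : IsCentralFixed S (bbEl β) := by
  refine ⟨commute_bbEl β, ?_⟩
  rw [bbEl, map_sub, map_smul, hS.map_mul, hS.isCentralFixed_e0.map_eq,
    hS.isCentralFixed_e1.map_eq, hS.map_Cas, (commute_e1 Cas).eq]

end IsAntipode

/-! ### The Drinfeld element and the balancing element -/

section Balancing

variable {S : Q →ₗ[ℂ] Q}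

lemma uMap2_R00_mul_e0 (hS : IsAntipode S) :
    uMap2 S 1 R00 * e0 = gK * (ribbonFactor * e0) := by
  have prefactor : uMap2 S 1 (t2 1 1 + t2 1 gK + t2 gK 1 - t2 gK gK) = gK + gKi := by
    simp only [map_add, map_sub, uMap2_t2, hS.map_one, hS.map_gK, mul_one, one_mul, gKi_mul_gK]
    abel
  rw [R00, map_smul, uMap2_mul hS.map_mul, prefactor]
  simp only [ribbonFactor_mul_e0, map_add, map_smul, uMap2_t2, hS.map_one, hS.map_gF,
    smul_mul_assoc, mul_smul_comm, one_mul, mul_one, add_mul, mul_add, mul_assoc, Q.neg_mul,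
    Q.mul_neg, gKi_mul, gK_mul_gK_mul_e0, gK_mul_gE_mul, gK_mul_gF_mul, gF_mul_gE_mul, neg_neg]
  match_scalars <;> grind [Complex.I_sq]

lemma uMap2_R11_mul_e1 (hS : IsAntipode S) (β : ℂ) :
    uMap2 S 1 (R11 β) * e1 = -(β • (gK * e1)) := by
  have prefactor :
      uMap2 S 1 (t2 1 1 - Complex.I • t2 1 gK - Complex.I • t2 gK 1 + t2 gK gK) * e1 =
        1 * ((2:ℂ) • e1) := by
    simp only [map_add, map_sub, map_smul, uMap2_t2, hS.map_one, hS.map_gK, mul_one, one_mul,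
      gKi_mul_gK, add_mul, sub_mul, smul_mul_assoc, gKi_mul_e1]
    module
  rw [R11, map_smul, uMap2_mul hS.map_mul, smul_mul_assoc, ← uMap2_mul_left _ commute_e1, prefactor,
    uMap2_mul_left _ fun w ↦ (commute_e1 w).smul_left _]
  simp only [map_add, map_sub, map_smul, uMap2_t2, hS.map_one, hS.map_gF, hS.map_eEFK, eEF, eEK,
    smul_mul_assoc, mul_smul_comm, one_mul, mul_one, add_mul, sub_mul, mul_assoc, Q.neg_mul,
    Q.mul_neg, gKi_mul, gK_mul_gK_mul_e1, gK_mul_gE_mul, gK_mul_gF_mul, gF_mul_gE_mul,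
    gE_mul_gE_mul, mul_add, mul_sub, neg_neg, smul_neg, zero_add]
  match_scalars <;> grind [Complex.I_sq]

lemma uContract_gK_Phi111_mul_e1 (hS : IsAntipode S) (β : ℂ) :
    uContract S gK (Phi111 β) * e1 = β ^ 2 • (ribbonFactor * e1) := by
  simp only [Phi111, ribbonFactor_mul_e1, map_smul, map_add, map_sub, uContract_t3 hS.map_mul,
    hS.map_one, hS.map_gK, hS.map_gE, hS.map_gF, hS.map_eEF, hS.map_eEK, hS.map_eFK,
    hS.map_eEFK, ↓hS.map_map_gF, ↓hS.map_map_eEK, ↓hS.map_map_eEFK]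
  simp only [eFK, eEFK, eEK, smul_mul_assoc, mul_smul_comm, one_mul, mul_one, add_mul, sub_mul,
    mul_add, mul_sub, mul_assoc, Q.neg_mul, Q.mul_neg, gKi_mul, gK_mul_gK_mul_e1, gK_mul_gE_mul,
    gK_mul_gF_mul, gF_mul_gE_mul, gE_mul_gE_mul, gF_mul_gF_mul, neg_neg, smul_neg, mul_zero,
    smul_zero, zero_add, add_zero, sub_zero]
  match_scalars <;> grind [Complex.I_sq]

lemma uMap2_Rmat (hS : IsAntipode S) (β : ℂ) :
    uMap2 S 1 (Rmat β) = uMap2 S 1 R00 * e0 + uMap2 S 1 (R11 β) * e1 := by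
  simp only [Rmat, map_add, uMap2_mul_t2 hS.map_mul _ _ hS.isCentralFixed_e0,
    uMap2_mul_t2 hS.map_mul _ _ hS.isCentralFixed_e1, e0_mul_e0, e0_mul_e1, e1_mul_e0, e1_mul_e1,
    mul_zero, add_zero]

lemma uMap2_Rmat_mul_e0 (hS : IsAntipode S) (β : ℂ) :
    uMap2 S 1 (Rmat β) * e0 = gK * (ribbonFactor * e0) := by
  rw [uMap2_Rmat hS, add_mul, mul_assoc, mul_assoc, e0_mul_e0, e1_mul_e0, mul_zero, add_zero,
    uMap2_R00_mul_e0 hS]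

lemma uMap2_Rmat_mul_e1 (hS : IsAntipode S) (β : ℂ) :
    uMap2 S 1 (Rmat β) * e1 = -(β • (gK * e1)) := by
  rw [uMap2_Rmat hS, add_mul, mul_assoc, mul_assoc, e1_mul_e1, e0_mul_e1, mul_zero, zero_add,
    uMap2_R11_mul_e1 hS]

lemma uContract_Phi (hS : IsAntipode S) (p : Q) (β : ℂ) :
    uContract S p (Phi β) = p * e0 + uContract S p (Phi111 β) * e1 := by
  have h0 := hS.isCentralFixed_e0
  have h1 := hS.isCentralFixed_e1
  simp only [Phi, map_add, uContract_t3_of_isCentralFixed hS.map_mul _ _ h0 h0,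
    uContract_t3_of_isCentralFixed hS.map_mul _ _ h0 h1,
    uContract_t3_of_isCentralFixed hS.map_mul _ _ h1 h0,
    uContract_t3_of_isCentralFixed hS.map_mul _ _ h1 h1,
    uContract_mul_t3 hS.map_mul _ _ h0 h1, uContract_mul_t3 hS.map_mul _ _ h1 h0,
    uContract_mul_t3 hS.map_mul _ _ h1 h1,
    e0_mul_e0, e0_mul_e1, e1_mul_e0, e1_mul_e1, mul_zero, add_zero]

lemma uDrin_eq (hS : IsAntipode S) (β : ℂ) :
    uDrin β S = bbEl β * uContract S (uMap2 S 1 (Rmat β)) (Phi β) :=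
  uBig_uMap1_tmul hS.map_mul 1 (hS.isCentralFixed_bbEl β) (Phi β) (Rmat β)

lemma uDrin_mul_e0 (hS : IsAntipode S) (β : ℂ) :
    uDrin β S * e0 = gK * (ribbonFactor * e0) := by
  rw [uDrin_eq hS, uContract_Phi hS, mul_assoc, add_mul, mul_assoc, mul_assoc, e0_mul_e0, e1_mul_e0,
    mul_zero, add_zero, uMap2_Rmat_mul_e0 hS, ← mul_assoc gK, (commute_bbEl β _).left_comm,
    bbEl_mul_e0]

lemma uDrin_mul_e1 (hS : IsAntipode S) (β : ℂ) :
    uDrin β S * e1 = β ^ 5 • (gK * e1) := by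
  have contract : uContract S (uMap2 S 1 (Rmat β)) (Phi111 β) * e1 =
      -(β ^ 3 • (ribbonFactor * e1)) := by
    have factor_central : -(β • (gK * e1)) = gK * -(β • e1) := by
      rw [Q.mul_neg, mul_smul_comm]
    have central (w : Q) : Commute (-(β • e1)) w := ((commute_e1 w).smul_left β).neg_left
    rw [← uContract_mul_left hS.map_mul _ commute_e1, uMap2_Rmat_mul_e1 hS, factor_central,
      uContract_mul_left hS.map_mul _ central, Q.mul_neg, mul_smul_comm,
      uContract_gK_Phi111_mul_e1 hS, smul_smul, ← pow_succ']
  rw [uDrin_eq hS, uContract_Phi hS, mul_assoc, add_mul, mul_assoc, mul_assoc, e1_mul_e1, e0_mul_e1,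
    mul_zero, zero_add, contract, Q.mul_neg, mul_smul_comm, (commute_bbEl β _).left_comm,
    bbEl_mul_e1, Q.mul_neg, mul_smul_comm, ribbonFactor_mul_gK_mul, ribbonFactor_sq_mul_e1]
  module

lemma bbEl_mul_uDrin (hS : IsAntipode S) (β : ℂ) :
    bbEl β * uDrin β S = vRib β * (gK * (e0 - (Complex.I * β ^ 6) • e1)) := by
  apply eq_of_mul_e0_of_mul_e1
  · calc bbEl β * uDrin β S * e0 = gK * (ribbonFactor * e0) := by
          rw [mul_assoc, uDrin_mul_e0 hS, ← mul_assoc gK, (commute_bbEl β _).left_comm, bbEl_mul_e0,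
            mul_assoc]
      _ = vRib β * (gK * (e0 - (Complex.I * β ^ 6) • e1)) * e0 := by
          rw [mul_assoc, mul_assoc, sub_mul, smul_mul_assoc, e0_mul_e0, e1_mul_e0,
            smul_zero, sub_zero, vRib_mul_gK_mul_e0]
  · calc bbEl β * uDrin β S * e1 = β ^ 7 • (ribbonFactor * e1) := by
          rw [mul_assoc, uDrin_mul_e1 hS, mul_smul_comm, (commute_bbEl β _).left_comm, bbEl_mul_e1,
            Q.mul_neg, mul_smul_comm, ← ribbonFactor_mul_gK_mul, ← ribbonFactor_mul_gK_mul,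
            gK_mul_gK_mul_e1, Q.mul_neg]
          module
      _ = -((Complex.I * β ^ 6) • (vRib β * (gK * e1))) := by
          rw [vRib_mul_gK_mul_e1]
          match_scalars
          linear_combination β ^ 7 * Complex.I_sq
      _ = vRib β * (gK * (e0 - (Complex.I * β ^ 6) • e1)) * e1 := by
          rw [mul_assoc, mul_assoc, sub_mul, smul_mul_assoc, e0_mul_e1, e1_mul_e1,
            zero_sub, Q.mul_neg, Q.mul_neg, mul_smul_comm, mul_smul_comm]

theorem balG_eq (hS : IsAntipode S) {β : ℂ} (hβ : β ≠ 0) :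
    balG β S = gK * (e0 - (Complex.I * β ^ 6) • e1) := by
  rw [balG, hS.map_one, mul_one, (commute_bbEl β _).eq, mul_assoc, bbEl_mul_uDrin hS,
    Ring.inverse_mul_cancel_left _ _ (isUnit_vRib hβ)]

end Balancing

/-- the balancing element `g = b·S(α)·v⁻¹·u` (with `α = 1` and `u`
the Drinfeld element) equals `K` if `β² = −i` and `K⁻¹` if `β² = i`; in particular
it is group-like. -/
theorem statement18 (β : ℂ) (hβ : β ^ 4 = -1)
    (Δ : Q →ₐ[ℂ] TP2 ℂ Q)
    (hΔE : Δ gE = (1:Q) ⊗ₜ[ℂ] gE + gE ⊗ₜ[ℂ] gK)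
    (hΔF : Δ gF = gKi ⊗ₜ[ℂ] gF + gF ⊗ₜ[ℂ] (1:Q))
    (hΔK : Δ gK = gK ⊗ₜ[ℂ] gK)
    (S : Q →ₗ[ℂ] Q) (hS1 : S 1 = 1) (hSmul : ∀ a b : Q, S (a * b) = S b * S a)
    (hSE : S gE = -(gE * gKi)) (hSF : S gF = -(gK * gF)) (hSK : S gK = gKi) :
    (β ^ 2 = -Complex.I → balG β S = gK) ∧
    (β ^ 2 = Complex.I → balG β S = gKi) ∧
    Δ (balG β S) = balG β S ⊗ₜ[ℂ] balG β S := by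
  have hβ₀ : β ≠ 0 := by rintro rfl; norm_num at hβ
  have balG_eq_smul := balG_eq ⟨hS1, hSmul, hSE, hSF, hSK⟩ hβ₀
  have balG_eq_gK (h : β ^ 2 = -Complex.I) : balG β S = gK := by
    have coeff : Complex.I * β ^ 6 = -1 := by grind [Complex.I_sq]
    rw [balG_eq_smul, coeff, Q.neg_smul, one_smul, sub_neg_eq_add, e0_add_e1, mul_one]
  have balG_eq_gKi (h : β ^ 2 = Complex.I) : balG β S = gKi := by
    have coeff : Complex.I * β ^ 6 = 1 := by grind [Complex.I_sq]
    rw [balG_eq_smul, coeff, one_smul, gK_mul_e0_sub_e1]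
  have hΔKi : Δ gKi = gKi ⊗ₜ[ℂ] gKi := by
    simp only [gKi_eq, map_mul, hΔK, Algebra.TensorProduct.tmul_mul_tmul]
  have sq_eq : β ^ 2 = -Complex.I ∨ β ^ 2 = Complex.I := by
    rw [or_comm, ← sq_eq_sq_iff_eq_or_eq_neg, Complex.I_sq, ← pow_mul, hβ]
  refine ⟨balG_eq_gK, balG_eq_gKi, ?_⟩
  rcases sq_eq with h | h
  · rw [balG_eq_gK h, hΔK]
  · rw [balG_eq_gKi h, hΔKi]
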